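/- (Glazman) Let C be a conjugation on a complex Hilbert space H and let T be a densely defined, dissipative, C-symmetric operator in H. Then T admits a C-self-adjoint maximal dissipative extension: there exists an operator T̃ in H such that dom T ⊆ dom T̃, T̃ f = T f for all f ∈ dom T, T̃ is maximal dissipative, and T̃ is C-self-adjoint, i.e. dom T̃ = {C y : y ∈ dom T̃*} and T̃(C y) = C(T̃* y) for all y ∈ dom T̃*. -/

import Mathlib

local notation "⟪" x ", " y "⟫" => @inner ℂ _ _ x y

/-- A conjugation on a complex inner product space: additive, conjugate-homogeneous,
isometric and involutive. -/
def IsConjugation {H : Type*} [NormedAddCommGroup H] [InnerProductSpace ℂ H]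
    (C : H → H) : Prop :=
  (∀ x y, C (x + y) = C x + C y) ∧
  (∀ (a : ℂ) (x : H), C (a • x) = (starRingEnd ℂ) a • C x) ∧
  (∀ x, ‖C x‖ = ‖x‖) ∧
  (∀ x, C (C x) = x)

/-- An (unbounded) operator `T` in `H` is dissipative if `Im ⟨T f, f⟩ ≥ 0` on its domain
(first argument of the inner product linear, i.e. `Im ⟪f, T f⟫_Mathlib ≥ 0`). -/
def IsDissipative {H : Type*} [NormedAddCommGroup H] [InnerProductSpace ℂ H]
    (T : H →ₗ.[ℂ] H) : Prop :=
  ∀ f : T.domain, 0 ≤ (⟪(f : H), T f⟫).im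

/-- `T` is maximal dissipative if it is dissipative and has no proper dissipative
extension. -/
def IsMaximalDissipative {H : Type*} [NormedAddCommGroup H] [InnerProductSpace ℂ H]
    (T : H →ₗ.[ℂ] H) : Prop :=
  IsDissipative T ∧ ∀ S : H →ₗ.[ℂ] H, IsDissipative S → T ≤ S → S = T

/-- `T` is `C`-symmetric: `⟨T f, C g⟩ = ⟨f, C (T g)⟩` for `f, g` in the domain (stated with
Mathlib's inner product, conjugate-linear in the first argument). -/
def IsCSymmetricPMap {H : Type*} [NormedAddCommGroup H] [InnerProductSpace ℂ H]
    (C : H → H) (T : H →ₗ.[ℂ] H) : Prop :=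
  ∀ f g : T.domain, ⟪C (g : H), T f⟫ = ⟪C (T g), (f : H)⟫

/-- `T` is `C`-self-adjoint: `dom T = C (dom T*)` and `T (C y) = C (T* y)` for
`y ∈ dom T*`. -/
def IsCSelfAdjointPMap {H : Type*} [NormedAddCommGroup H] [InnerProductSpace ℂ H]
    [CompleteSpace H] (C : H → H) (T : H →ₗ.[ℂ] H) : Prop :=
  ((T.domain : Set H) = C '' (T.adjoint.domain : Set H)) ∧
  ∀ y : T.adjoint.domain, ∀ hy : C (y : H) ∈ T.domain,
    T ⟨C (y : H), hy⟩ = C (T.adjoint y)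

/-!
The Cayley transform `(T - i)(T + i)⁻¹` turns a dissipative `C`-symmetric operator into a
contraction defined on `range (T + i)` and symmetric for the bilinear form `⟪C x, y⟫`. Such a
contraction extends to a symmetric contraction `M` on all of `H`: the strong Parrott theorem gives
an everywhere defined contraction `W` such that both `W` and its transpose are extensions, and `M`
is their mean. As `T` is densely defined, `1 - M` has dense range, so by symmetry `M` has no nonzero
fixed point and is the Cayley transform of a dissipative `C`-symmetric extension `T'` of `T` with
`range (T' + i) = H`. Surjectivity of `T' + i` forces both maximality and `C`-self-adjointness.
-/

section Contraction

variable {𝕜 X E F : Type*} [RCLike 𝕜] [AddCommGroup X] [Module 𝕜 X]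
  [NormedAddCommGroup E] [InnerProductSpace 𝕜 E] [CompleteSpace E]

theorem exists_contraction_of_norm_le [NormedAddCommGroup F] [NormedSpace 𝕜 F] [CompleteSpace F]
    (a : X →ₗ[𝕜] E) (b : X →ₗ[𝕜] F) (hab : ∀ x, ‖b x‖ ≤ ‖a x‖) :
    ∃ L : E →L[𝕜] F, ‖L‖ ≤ 1 ∧ (∀ x, L (a x) = b x) ∧ ∀ z ∈ (LinearMap.range a)ᗮ, L z = 0 := by
  let K := (LinearMap.range a).topologicalClosure
  have : CompleteSpace K := (Submodule.isClosed_topologicalClosure _).completeSpace_coe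
  let e : X →ₗ[𝕜] K :=
    a.codRestrict K fun x => Submodule.le_topologicalClosure _ (LinearMap.mem_range_self a x)
  have he : DenseRange e := by
    rw [DenseRange, Subtype.dense_iff, ← Set.range_comp]
    exact fun _ hx => hx
  have hbe : ∀ x, ‖b x‖ ≤ 1 * ‖e x‖ := by simpa [e] using hab
  refine ⟨b.extendOfNorm e ∘L K.orthogonalProjectionOnto, ?_, fun x => ?_, fun z hz => ?_⟩
  · calc ‖b.extendOfNorm e ∘L K.orthogonalProjectionOnto‖
        ≤ ‖b.extendOfNorm e‖ * ‖K.orthogonalProjectionOnto‖ :=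
          ContinuousLinearMap.opNorm_comp_le _ _
      _ ≤ 1 * 1 := by
        gcongr
        · exact LinearMap.opNorm_extendOfNorm_le he zero_le_one hbe
        · exact K.orthogonalProjectionOnto_norm_le
      _ = 1 := one_mul 1
  · have hproj : K.orthogonalProjectionOnto (a x) = e x :=
      Submodule.orthogonalProjectionOnto_mem_subspace_eq_self (e x)
    rw [ContinuousLinearMap.comp_apply, hproj, LinearMap.extendOfNorm_eq he ⟨1, hbe⟩]
  · have hzK : z ∈ Kᗮ := by rwa [Submodule.orthogonal_closure]
    rw [ContinuousLinearMap.comp_apply,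
      Submodule.orthogonalProjectionOnto_apply_of_mem_orthogonal hzK, map_zero]

end Contraction

section Parrott

variable {X E F : Type*} [AddCommGroup X] [Module ℂ X]
  [NormedAddCommGroup E] [InnerProductSpace ℂ E] [CompleteSpace E]
  [NormedAddCommGroup F] [InnerProductSpace ℂ F] [CompleteSpace F]

theorem exists_defect_operator (R : E →L[ℂ] F) (hR : ‖R‖ ≤ 1) :
    ∃ S : E →L[ℂ] E, ∀ h, ‖S h‖ ^ 2 = ‖h‖ ^ 2 - ‖R h‖ ^ 2 := by
  have hle : R.adjoint ∘L R ≤ 1 := by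
    rw [← CStarAlgebra.norm_le_one_iff_of_nonneg (R.adjoint ∘L R)
      ((ContinuousLinearMap.nonneg_iff_isPositive _).2 R.isPositive_adjoint_comp_self),
      ContinuousLinearMap.norm_adjoint_comp_self]
    exact mul_le_one₀ hR (norm_nonneg R) hR
  obtain ⟨S, hS⟩ := CStarAlgebra.nonneg_iff_eq_star_mul_self.1 (sub_nonneg.2 hle)
  refine ⟨S, fun h => ?_⟩
  have hSS : S.adjoint ∘L S = 1 - R.adjoint ∘L R := hS.symm
  rw [S.apply_norm_sq_eq_inner_adjoint_left, R.apply_norm_sq_eq_inner_adjoint_left, hSS,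
    sub_apply, one_apply_eq_self, inner_sub_left, map_sub,
    inner_self_eq_norm_sq]

-- The strong Parrott theorem: `W` is `R + P L S`, where `P` is the projection onto `N`, `S` is the
-- defect operator of `R`, and the contraction `L` takes `S (a x)` to `b x - R (a x)`.
theorem exists_contraction_sub_mem (a : X →ₗ[ℂ] E) (b : X →ₗ[ℂ] F) (hab : ∀ x, ‖b x‖ ≤ ‖a x‖)
    (R : E →L[ℂ] F) (hR : ‖R‖ ≤ 1) (N : Submodule ℂ F) [N.HasOrthogonalProjection]
    (hRN : ∀ h, R h ∈ Nᗮ) (hbN : ∀ x, b x - R (a x) ∈ N) :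
    ∃ W : E →L[ℂ] F, ‖W‖ ≤ 1 ∧ (∀ x, W (a x) = b x) ∧ ∀ h, W h - R h ∈ N := by
  have pythagoras (h : E) {z : F} (hz : z ∈ N) : ‖R h + z‖ ^ 2 = ‖R h‖ ^ 2 + ‖z‖ ^ 2 := by
    simpa only [sq] using norm_add_sq_eq_norm_sq_add_norm_sq_of_inner_eq_zero (𝕜 := ℂ) (R h) z
      (Submodule.inner_left_of_mem_orthogonal hz (hRN h))
  obtain ⟨S, hS⟩ := exists_defect_operator R hR
  have hdefect (x : X) : ‖(b - R.toLinearMap ∘ₗ a) x‖ ≤ ‖(S.toLinearMap ∘ₗ a) x‖ := by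
    have hb := pythagoras (a x) (hbN x)
    rw [add_sub_cancel] at hb
    have hsq : ‖b x‖ ^ 2 ≤ ‖a x‖ ^ 2 := by gcongr; exact hab x
    refine le_of_sq_le_sq ?_ (norm_nonneg _)
    change ‖b x - R (a x)‖ ^ 2 ≤ ‖S (a x)‖ ^ 2
    linarith [hS (a x)]
  obtain ⟨L, hL, hLS, -⟩ := exists_contraction_of_norm_le _ _ hdefect
  refine ⟨R + N.starProjection ∘L L ∘L S, ?_, fun x => ?_, fun h => ?_⟩
  · refine ContinuousLinearMap.opNorm_le_bound _ zero_le_one fun h => ?_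
    rw [one_mul]
    refine le_of_sq_le_sq ?_ (norm_nonneg _)
    have hLSh : ‖N.starProjection (L (S h))‖ ≤ ‖S h‖ :=
      (N.norm_starProjection_apply_le _).trans (L.le_of_opNorm_le hL (S h) |>.trans_eq (one_mul _))
    calc ‖R h + N.starProjection (L (S h))‖ ^ 2
        = ‖R h‖ ^ 2 + ‖N.starProjection (L (S h))‖ ^ 2 :=
          pythagoras h (N.starProjection_apply_mem _)
      _ ≤ ‖R h‖ ^ 2 + ‖S h‖ ^ 2 := by gcongr
      _ = ‖h‖ ^ 2 := by rw [hS h, add_sub_cancel]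
  · have hLSx : L (S (a x)) = b x - R (a x) := hLS x
    simp only [add_apply, ContinuousLinearMap.comp_apply, hLSx,
      Submodule.starProjection_eq_self_iff.2 (hbN x), add_sub_cancel]
  · simp only [add_apply, ContinuousLinearMap.comp_apply, add_sub_cancel_left,
      Submodule.starProjection_apply_mem]

end Parrott

namespace IsConjugation

variable {H X : Type*} [NormedAddCommGroup H] [InnerProductSpace ℂ H] [AddCommGroup X] [Module ℂ X]
  {C : H → H}

/-- A conjugation as a conjugate-linear isometry. -/
def toLinearIsometry (hC : IsConjugation C) : H →ₗᵢ⋆[ℂ] H where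
  toFun := C
  map_add' := hC.1
  map_smul' := hC.2.1
  norm_map' := hC.2.2.1

theorem apply_apply (hC : IsConjugation C) (x : H) : C (C x) = x := hC.2.2.2 x

theorem inner_map_map (hC : IsConjugation C) (x y : H) : ⟪C x, C y⟫ = ⟪y, x⟫ := by
  obtain ⟨hadd, hsmul, hnorm, -⟩ := hC
  have hnorm_add (z : ℂ) : ‖C x + z • C y‖ = ‖x + (starRingEnd ℂ) z • y‖ := by
    rw [← hnorm (x + _), hadd, hsmul, Complex.conj_conj]
  have hadd_one := hnorm_add 1
  have hsub_one := hnorm_add (-1)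
  have hsub_I := hnorm_add Complex.I
  have hadd_I := hnorm_add (-Complex.I)
  simp only [map_neg, map_one, Complex.conj_I, neg_neg, one_smul, neg_smul,
    ← sub_eq_add_neg] at hadd_one hsub_one hsub_I hadd_I
  rw [← inner_conj_symm y x, inner_eq_sum_norm_sq_div_four, inner_eq_sum_norm_sq_div_four x y]
  simp only [RCLike.I_to_complex, hadd_one, hsub_one, hsub_I, hadd_I, map_div₀, map_add,
    map_sub, map_mul, map_pow, RCLike.conj_ofReal, Complex.conj_I, map_ofNat]
  ring

/-- The symmetric bilinear form `(x, y) ↦ ⟪C x, y⟫` of a conjugation, for which `C`-symmetry is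
symmetry in the usual sense. -/
noncomputable def bilin (hC : IsConjugation C) : LinearMap.BilinForm ℂ H :=
  (innerₛₗ ℂ).comp hC.toLinearIsometry.toLinearMap

theorem bilin_apply (hC : IsConjugation C) (x y : H) : hC.bilin x y = ⟪C x, y⟫ := rfl

theorem bilin_comm (hC : IsConjugation C) (x y : H) : hC.bilin x y = hC.bilin y x := by
  rw [bilin_apply, bilin_apply, ← hC.inner_map_map y, hC.apply_apply]

theorem bilin_injective (hC : IsConjugation C) : Function.Injective hC.bilin := fun _ _ hxy =>
  hC.toLinearIsometry.injective (ext_inner_right ℂ fun z => DFunLike.congr_fun hxy z)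

theorem mem_orthogonal_map_iff (hC : IsConjugation C) (K : Submodule ℂ H) (z : H) :
    z ∈ (K.map hC.toLinearIsometry.toLinearMap)ᗮ ↔ ∀ x ∈ K, hC.bilin x z = 0 := by
  rw [Submodule.mem_orthogonal]
  exact Set.forall_mem_image

theorem apply_mem_orthogonal_iff (hC : IsConjugation C) (K : Submodule ℂ H) (z : H) :
    C z ∈ Kᗮ ↔ ∀ x ∈ K, hC.bilin x z = 0 := by
  simp only [Submodule.mem_orthogonal', hC.bilin_comm _ z, bilin_apply]

theorem eq_zero_of_apply_eq_self (hC : IsConjugation C) {M : H →ₗ[ℂ] H}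
    (hM : LinearMap.IsSelfAdjoint hC.bilin M)
    (hdense : Dense (LinearMap.range (LinearMap.id - M) : Set H)) {y : H} (hy : M y = y) :
    y = 0 := by
  have hCy : hC.toLinearIsometry y = 0 := by
    refine hdense.eq_zero_of_inner_left ℂ ?_
    rintro _ ⟨k, rfl⟩
    change hC.bilin y (k - M k) = 0
    rw [map_sub, ← hM, hy, sub_self]
  exact (map_eq_zero_iff _ hC.toLinearIsometry.injective).1 hCy

variable [CompleteSpace H]

/-- The transpose `C A* C` of a bounded operator with respect to the bilinear form of `C`. -/
noncomputable def transpose (hC : IsConjugation C) (A : H →L[ℂ] H) : H →L[ℂ] H :=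
  hC.toLinearIsometry.toContinuousLinearMap.comp
    (A.adjoint.comp hC.toLinearIsometry.toContinuousLinearMap)

theorem isAdjointPair_transpose (hC : IsConjugation C) (A : H →L[ℂ] H) :
    LinearMap.IsAdjointPair hC.bilin hC.bilin (hC.transpose A) A := fun x y => by
  change ⟪C (C (A.adjoint (C x))), y⟫ = ⟪C x, A y⟫
  rw [hC.apply_apply, ContinuousLinearMap.adjoint_inner_left]

theorem norm_transpose_le (hC : IsConjugation C) (A : H →L[ℂ] H) : ‖hC.transpose A‖ ≤ ‖A‖ := by
  refine ContinuousLinearMap.opNorm_le_bound _ (norm_nonneg A) fun x => ?_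
  calc ‖C (A.adjoint (C x))‖ = ‖A.adjoint (C x)‖ := hC.2.2.1 _
    _ ≤ ‖A.adjoint‖ * ‖C x‖ := A.adjoint.le_opNorm _
    _ = ‖A‖ * ‖x‖ := by rw [LinearIsometryEquiv.norm_map, hC.2.2.1]

-- The last condition makes the transpose of `W` extend `a x ↦ b x` too. It prescribes `W` modulo
-- the `bilin`-annihilator of `range a`: modulo it, `W` agrees with the transpose of any bounded
-- extension of `a x ↦ b x`.
theorem exists_contraction_bilin_eq (hC : IsConjugation C) (a b : X →ₗ[ℂ] H)
    (hab : ∀ x, ‖b x‖ ≤ ‖a x‖)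
    (hsymm : ∀ x y, hC.bilin (a y) (b x) = hC.bilin (b y) (a x)) :
    ∃ W : H →L[ℂ] H, ‖W‖ ≤ 1 ∧ (∀ x, W (a x) = b x) ∧
      ∀ x h, hC.bilin (a x) (W h) = hC.bilin (b x) h := by
  obtain ⟨V, hV, hVa, hVperp⟩ := exists_contraction_of_norm_le a b hab
  have hbilin (x : X) (h : H) : hC.bilin (a x) (hC.transpose V h) = hC.bilin (b x) h := by
    rw [hC.bilin_comm, hC.isAdjointPair_transpose V, hVa, hC.bilin_comm]
  let N := ((LinearMap.range a).map hC.toLinearIsometry.toLinearMap)ᗮ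
  have mem_N (z : H) : z ∈ N ↔ ∀ x, hC.bilin (a x) z = 0 :=
    (hC.mem_orthogonal_map_iff _ z).trans Set.forall_mem_range
  have hRN (h : H) : hC.transpose V h ∈ Nᗮ := fun z hz => by
    have hVz : V (C z) = 0 :=
      hVperp _ ((hC.apply_mem_orthogonal_iff _ z).2 ((hC.mem_orthogonal_map_iff _ z).1 hz))
    rw [← hC.apply_apply z, ← hC.bilin_apply, hC.bilin_comm, hC.isAdjointPair_transpose V, hVz,
      map_zero]
  obtain ⟨W, hW, hWa, hWN⟩ := exists_contraction_sub_mem a b hab (hC.transpose V)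
    ((hC.norm_transpose_le V).trans hV) N hRN
    fun x => (mem_N _).2 fun y => by rw [map_sub, hbilin, hsymm, sub_self]
  refine ⟨W, hW, hWa, fun x h => ?_⟩
  rw [← hbilin, ← sub_eq_zero, ← map_sub, (mem_N _).1 (hWN h) x]

theorem exists_isSelfAdjoint_contraction (hC : IsConjugation C) (a b : X →ₗ[ℂ] H)
    (hab : ∀ x, ‖b x‖ ≤ ‖a x‖)
    (hsymm : ∀ x y, hC.bilin (a y) (b x) = hC.bilin (b y) (a x)) :
    ∃ M : H →L[ℂ] H, ‖M‖ ≤ 1 ∧ (∀ x, M (a x) = b x) ∧ LinearMap.IsSelfAdjoint hC.bilin M := by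
  obtain ⟨W, hW, hWa, hWbilin⟩ := hC.exists_contraction_bilin_eq a b hab hsymm
  have htranspose := hC.isAdjointPair_transpose W
  have hWt (x : X) : hC.transpose W (a x) = b x :=
    hC.bilin_injective (LinearMap.ext fun h => by rw [htranspose, hWbilin])
  refine ⟨(2⁻¹ : ℂ) • (W + hC.transpose W), ?_, fun x => ?_, fun x y => ?_⟩
  · calc ‖(2⁻¹ : ℂ) • (W + hC.transpose W)‖ = 2⁻¹ * ‖W + hC.transpose W‖ := by
          rw [norm_smul, norm_inv, RCLike.norm_ofNat]
      _ ≤ 2⁻¹ * (1 + 1) := by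
        gcongr
        exact norm_add_le_of_le hW ((hC.norm_transpose_le W).trans hW)
      _ = 1 := by norm_num
  · rw [smul_apply, add_apply, hWa, hWt, ← two_smul ℂ, inv_smul_smul₀ two_ne_zero]
  · have hswap : hC.bilin (W x) y = hC.bilin x (hC.transpose W y) := by
      rw [hC.bilin_comm, ← htranspose, hC.bilin_comm]
    simp only [smul_apply, add_apply, map_smul, map_add,
      LinearMap.smul_apply, LinearMap.add_apply, htranspose x y, hswap]
    rw [add_comm]

end IsConjugation

section Cayley

variable {V : Type*} [AddCommGroup V] [Module ℂ V] {T : V →ₗ.[ℂ] V}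

/-- The operator `T + z` on the domain of `T`, the two factors of the Cayley transform
`(T - i)(T + i)⁻¹` being the cases `z = -i` and `z = i`. -/
def addScalar (T : V →ₗ.[ℂ] V) (z : ℂ) : T.domain →ₗ[ℂ] V :=
  T.toFun + z • T.domain.subtype

theorem addScalar_apply (z : ℂ) (f : T.domain) : addScalar T z f = T f + z • (f : V) := rfl

/-- The inverse Cayley transform `i (1 + M)(1 - M)⁻¹`. Its graph is described by the equivalent
equation `M (y + i x) = y - i x`, which defines an operator when `M` has no nonzero fixed point;
otherwise `Submodule.toLinearPMap` is zero on the first projection of that graph. -/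
noncomputable def inverseCayley (M : V →ₗ[ℂ] V) : V →ₗ.[ℂ] V :=
  (LinearMap.eqLocus
    (M ∘ₗ (LinearMap.snd ℂ V V + Complex.I • LinearMap.fst ℂ V V))
    (LinearMap.snd ℂ V V - Complex.I • LinearMap.fst ℂ V V)).toLinearPMap

variable {M : V →ₗ[ℂ] V}

theorem mem_graph_inverseCayley_iff (hM : ∀ y, M y = y → y = 0) {x y : V} :
    (x, y) ∈ (inverseCayley M).graph ↔ M (y + Complex.I • x) = y - Complex.I • x := by
  rw [inverseCayley, Submodule.toLinearPMap_graph_eq]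
  · rfl
  · rintro ⟨_, y⟩ hxy rfl
    exact hM y (by simpa using hxy)

theorem apply_addScalar_inverseCayley (hM : ∀ y, M y = y → y = 0)
    (f : (inverseCayley M).domain) :
    M (addScalar (inverseCayley M) Complex.I f) =
      addScalar (inverseCayley M) (-Complex.I) f := by
  simpa only [addScalar_apply, neg_smul, ← sub_eq_add_neg] using
    (mem_graph_inverseCayley_iff hM).1 ((inverseCayley M).mem_graph f)

theorem le_inverseCayley (hM : ∀ y, M y = y → y = 0)
    (hT : ∀ f, M (addScalar T Complex.I f) = addScalar T (-Complex.I) f) :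
    T ≤ inverseCayley M := by
  refine LinearPMap.le_of_le_graph ?_
  rintro ⟨x, y⟩ hxy
  obtain ⟨f, rfl, rfl⟩ := T.mem_graph_iff.1 hxy
  simpa only [mem_graph_inverseCayley_iff hM, addScalar_apply, neg_smul, ← sub_eq_add_neg]
    using hT f

theorem domain_le_range_id_sub
    (hT : ∀ f, M (addScalar T Complex.I f) = addScalar T (-Complex.I) f) :
    T.domain ≤ LinearMap.range (LinearMap.id - M) := fun f hf => by
  have hdiff :
      (LinearMap.id - M : V →ₗ[ℂ] V) (addScalar T Complex.I ⟨f, hf⟩) = (2 * Complex.I) • f := by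
    rw [LinearMap.sub_apply, LinearMap.id_apply, hT, addScalar_apply, addScalar_apply]
    module
  exact (Submodule.smul_mem_iff _ (by simp : 2 * Complex.I ≠ 0)).1 ⟨_, hdiff⟩

theorem surjective_addScalar_inverseCayley (hM : ∀ y, M y = y → y = 0) :
    Function.Surjective (addScalar (inverseCayley M) Complex.I) := by
  intro k
  let x := (-(Complex.I / 2)) • (k - M k)
  let y := (2⁻¹ : ℂ) • (k + M k)
  have hIx : Complex.I • x = (2⁻¹ : ℂ) • (k - M k) := by
    rw [smul_smul]
    congr 1
    linear_combination (-1 / 2) * Complex.I_mul_I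
  have hadd : y + Complex.I • x = k := by rw [hIx]; module
  have hsub : y - Complex.I • x = M k := by rw [hIx]; module
  have hxy : (x, y) ∈ (inverseCayley M).graph := by
    rw [mem_graph_inverseCayley_iff hM, hadd, hsub]
  obtain ⟨f, hfx, hfy⟩ := (inverseCayley M).mem_graph_iff.1 hxy
  exact ⟨f, by rw [addScalar_apply, hfx, hfy, hadd]⟩

end Cayley

section Dissipative

variable {H : Type*} [NormedAddCommGroup H] [InnerProductSpace ℂ H] {C : H → H} {T : H →ₗ.[ℂ] H}

theorem norm_add_I_smul_sq_sub_norm_sub_I_smul_sq (x y : H) :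
    ‖y + Complex.I • x‖ ^ 2 - ‖y - Complex.I • x‖ ^ 2 = 4 * (⟪x, y⟫).im := by
  have him : RCLike.re ⟪y, Complex.I • x⟫ = (⟪x, y⟫).im := by
    rw [inner_smul_right, ← inner_conj_symm y x]
    simp [-inner_conj_symm]
  rw [norm_add_sq (𝕜 := ℂ), norm_sub_sq (𝕜 := ℂ), him]
  ring

theorem isDissipative_iff_norm_addScalar_le :
    IsDissipative T ↔ ∀ f, ‖addScalar T (-Complex.I) f‖ ≤ ‖addScalar T Complex.I f‖ := by
  refine forall_congr' fun f => ?_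
  have hnorm := norm_add_I_smul_sq_sub_norm_sub_I_smul_sq (f : H) (T f)
  rw [addScalar_apply, addScalar_apply, neg_smul, ← sub_eq_add_neg,
    ← sq_le_sq₀ (norm_nonneg _) (norm_nonneg _)]
  constructor <;> intro h <;> linarith

theorem IsDissipative.addScalar_injective (hT : IsDissipative T) :
    Function.Injective (addScalar T Complex.I) := by
  refine (injective_iff_map_eq_zero _).2 fun f hplus => ?_
  have hminus : addScalar T (-Complex.I) f = 0 := by
    simpa [hplus] using isDissipative_iff_norm_addScalar_le.1 hT f
  have hdiff : (2 * Complex.I) • (f : H) = 0 := by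
    rw [← sub_self (0 : H)]
    nth_rewrite 1 [← hplus]
    rw [← hminus, addScalar_apply, addScalar_apply]
    module
  exact Subtype.ext ((smul_eq_zero_iff_right (by simp)).1 hdiff)

theorem IsDissipative.isMaximalDissipative (hT : IsDissipative T)
    (hsurj : Function.Surjective (addScalar T Complex.I)) : IsMaximalDissipative T := by
  refine ⟨hT, fun S hS hTS => (LinearPMap.eq_of_le_of_domain_eq hTS ?_).symm⟩
  refine le_antisymm hTS.1 fun f hf => ?_
  obtain ⟨g, hg⟩ := hsurj (addScalar S Complex.I ⟨f, hf⟩)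
  have hgS : addScalar S Complex.I ⟨g, hTS.1 g.2⟩ = addScalar T Complex.I g := by
    rw [addScalar_apply, addScalar_apply, hTS.2 (x := g) (y := ⟨g, hTS.1 g.2⟩) rfl]
  have hgf : (g : H) = f := congrArg Subtype.val (hS.addScalar_injective (hgS.trans hg))
  exact hgf ▸ g.2

theorem IsConjugation.isCSymmetricPMap_iff (hC : IsConjugation C) :
    IsCSymmetricPMap C T ↔ ∀ f g,
      hC.bilin (addScalar T Complex.I g) (addScalar T (-Complex.I) f) =
        hC.bilin (addScalar T (-Complex.I) g) (addScalar T Complex.I f) := by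
  refine forall₂_congr fun f g => ?_
  have hdiff : hC.bilin (addScalar T Complex.I g) (addScalar T (-Complex.I) f) -
      hC.bilin (addScalar T (-Complex.I) g) (addScalar T Complex.I f) =
        2 * Complex.I * (hC.bilin g (T f) - hC.bilin (T g) f) := by
    simp only [addScalar_apply, map_add, map_smul, LinearMap.add_apply, LinearMap.smul_apply,
      smul_eq_mul]
    ring
  rw [← sub_eq_zero (b := hC.bilin _ _), hdiff, mul_eq_zero_iff_left (by simp), sub_eq_zero]
  rfl

theorem IsConjugation.mem_graph_of_bilin_eq (hC : IsConjugation C) (hT : IsCSymmetricPMap C T)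
    (hsurj : Function.Surjective (addScalar T Complex.I)) {x z : H}
    (hxz : ∀ f : T.domain, hC.bilin z f = hC.bilin x (T f)) : (x, z) ∈ T.graph := by
  obtain ⟨g, hg⟩ := hsurj (z + Complex.I • x)
  rw [addScalar_apply] at hg
  have hgx : (g : H) = x := by
    refine hC.bilin_injective (LinearMap.ext fun k => ?_)
    obtain ⟨f, rfl⟩ := hsurj k
    have hTg : hC.bilin g (T f) = hC.bilin (T g) f := hT f g
    calc hC.bilin g (addScalar T Complex.I f)
        = hC.bilin (T g + Complex.I • (g : H)) f := by simp [addScalar_apply, hTg]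
      _ = hC.bilin x (addScalar T Complex.I f) := by rw [hg]; simp [addScalar_apply, hxz]
  exact T.mem_graph_iff.2 ⟨g, hgx, by simpa [hgx] using hg⟩

theorem IsConjugation.isCSelfAdjointPMap [CompleteSpace H] (hC : IsConjugation C)
    (hdense : Dense (T.domain : Set H)) (hT : IsCSymmetricPMap C T)
    (hsurj : Function.Surjective (addScalar T Complex.I)) : IsCSelfAdjointPMap C T := by
  have hgraph (y : T.adjoint.domain) : (C y, C (T.adjoint y)) ∈ T.graph :=
    hC.mem_graph_of_bilin_eq hT hsurj fun f => by
      simpa only [hC.bilin_apply, hC.apply_apply] using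
        LinearPMap.adjoint_isFormalAdjoint hdense y f
  refine ⟨Set.Subset.antisymm (fun f hf => ?_) ?_, fun y hy => ?_⟩
  · exact ⟨C f, LinearPMap.mem_adjoint_domain_of_exists _
      ⟨C (T ⟨f, hf⟩), fun g => (hT g ⟨f, hf⟩).symm⟩, hC.apply_apply f⟩
  · rintro _ ⟨y, hy, rfl⟩
    exact LinearPMap.mem_domain_of_mem_graph (hgraph ⟨y, hy⟩)
  · exact T.mem_graph_snd_inj (T.mem_graph ⟨C y, hy⟩) (hgraph y) rfl

end Dissipative

/-- Glazman: every densely defined dissipative `C`-symmetric operator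
admits a `C`-self-adjoint maximal dissipative extension. -/
theorem stmt_16 {H : Type*} [NormedAddCommGroup H] [InnerProductSpace ℂ H] [CompleteSpace H]
    (C : H → H) (hC : IsConjugation C)
    (T : H →ₗ.[ℂ] H) (hdense : Dense (T.domain : Set H))
    (hdiss : IsDissipative T) (hsym : IsCSymmetricPMap C T) :
    ∃ T' : H →ₗ.[ℂ] H, T ≤ T' ∧ IsMaximalDissipative T' ∧ IsCSelfAdjointPMap C T' := by
  obtain ⟨M, hMnorm, hMT, hMsym⟩ := hC.exists_isSelfAdjoint_contraction _ _
    (isDissipative_iff_norm_addScalar_le.1 hdiss) (hC.isCSymmetricPMap_iff.1 hsym)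
  have hfix (y : H) : M.toLinearMap y = y → y = 0 :=
    hC.eq_zero_of_apply_eq_self hMsym (hdense.mono (domain_le_range_id_sub hMT))
  have hle : T ≤ inverseCayley M.toLinearMap := le_inverseCayley hfix hMT
  have hM (f : (inverseCayley M.toLinearMap).domain) :
      M (addScalar _ Complex.I f) = addScalar _ (-Complex.I) f :=
    apply_addScalar_inverseCayley hfix f
  have hsurj := surjective_addScalar_inverseCayley hfix
  have hdiss' : IsDissipative (inverseCayley M.toLinearMap) :=
    isDissipative_iff_norm_addScalar_le.2 fun f => by
      simpa only [← hM, one_mul] using M.le_of_opNorm_le hMnorm _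
  have hsym' : IsCSymmetricPMap C (inverseCayley M.toLinearMap) :=
    hC.isCSymmetricPMap_iff.2 fun f g => by
      simpa only [← hM] using (hMsym _ _).symm
  exact ⟨_, hle, hdiss'.isMaximalDissipative hsurj,
    hC.isCSelfAdjointPMap (hdense.mono hle.1) hsym' hsurj⟩
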